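/- arXiv:2201.06636 — 6 statements merged into one kernel-verified Lean document; each statement's English description precedes it below -/
import Mathlib

section
/- Define N(m) = m XOR (2m) for m ∈ ℕ, where XOR is the bitwise exclusive or on ℕ. Then for every m ∈ ℕ: N(4m) = 4·N(m); N(4m+1) = 4·N(m) + 3; N(4m+2) = 2·N(2m+1); and N(4m+3) + 1 = 2·N(2m+1). -/
/-- `N(m) = m XOR 2m`. -/
def nimDouble (m : ℕ) : ℕ := m ^^^ (2 * m)

theorem even_nimDouble {m : ℕ} : Even (nimDouble m) ↔ Even m := by
  simp only [nimDouble, Nat.even_xor, even_two_mul, iff_true]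

theorem nimDouble_two_mul (m : ℕ) : nimDouble (2 * m) = 2 * nimDouble m :=
  Nat.xor_bit false m false (2 * m)

theorem nimDouble_two_mul_add_one (m : ℕ) :
    nimDouble (2 * m + 1) = 2 * (nimDouble m ^^^ 1) + 1 :=
  calc nimDouble (2 * m + 1)
    _ = 2 * (m ^^^ (2 * m + 1)) + 1 := Nat.xor_bit true m false (2 * m + 1)
    _ = 2 * (nimDouble m ^^^ 1) + 1 := by
      rw [← Nat.xor_one_of_even (even_two_mul m), ← Nat.xor_assoc, nimDouble]

theorem nimDouble_two_mul_add_one_of_even {m : ℕ} (hm : Even m) :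
    nimDouble (2 * m + 1) = 2 * nimDouble m + 3 := by
  rw [nimDouble_two_mul_add_one, Nat.xor_one_of_even (even_nimDouble.mpr hm), mul_add]

theorem nimDouble_two_mul_add_one_add_one_of_odd {m : ℕ} (hm : Odd m) :
    nimDouble (2 * m + 1) + 1 = 2 * nimDouble m := by
  have hN : Odd (nimDouble m) := by
    rwa [← Nat.not_even_iff_odd, even_nimDouble, Nat.not_even_iff_odd]
  rw [nimDouble_two_mul_add_one, Nat.xor_one_of_odd hN, add_assoc, ← mul_add_one,
    Nat.sub_one_add_one hN.pos.ne']

theorem stmt_9 (m : ℕ) :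
    nimDouble (4 * m) = 4 * nimDouble m ∧
    nimDouble (4 * m + 1) = 4 * nimDouble m + 3 ∧
    nimDouble (4 * m + 2) = 2 * nimDouble (2 * m + 1) ∧
    nimDouble (4 * m + 3) + 1 = 2 * nimDouble (2 * m + 1) := by
  have four_mul_eq (n : ℕ) : 4 * n = 2 * (2 * n) := mul_assoc 2 2 n
  refine ⟨?_, ?_, ?_, ?_⟩
  · rw [four_mul_eq, nimDouble_two_mul, nimDouble_two_mul, ← four_mul_eq]
  · rw [four_mul_eq, nimDouble_two_mul_add_one_of_even (even_two_mul m), nimDouble_two_mul,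
      ← four_mul_eq]
  · rw [four_mul_eq, ← mul_add_one, nimDouble_two_mul]
  · rw [show 4 * m + 3 = 2 * (2 * m + 1) + 1 by ring]
    exact nimDouble_two_mul_add_one_add_one_of_odd (odd_two_mul_add_one m)
end

section
/- Let e ∈ ℕ be evil, i.e., the binary expansion of e contains an even number of 1s. Then there exists a unique m ∈ ℕ such that m XOR (2m) = e. -/
/-- A natural number is evil if its binary expansion has an even number of ones. -/
def Evil (n : ℕ) : Prop := Even ((Nat.digits 2 n).count 1)

/-!
Write `s n` for the parity of the binary digit sum of `n`. If `m ^^^ (2 * m + c) = n` with `c < 2`,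
then the last bit `b` of `n` is that of `m` plus `c` modulo 2. For `c = s n` this makes the last bit
of `m` equal to `s n + b = s (n / 2)`, and deleting the last bits leaves the same equation for
`m / 2`, `n / 2` and `s (n / 2)`; hence a solution exists for every `n`. Evil numbers are those with
`s n = 0`. Uniqueness holds because the difference `d = m ^^^ m'` of two solutions satisfies
`d = 2 * d`.
-/

/-- The parity of the number of ones in the binary expansion of `n`, i.e. the `n`-th term of the
Thue–Morse sequence, with `false` for even and `true` for odd. As a `Bool` it can serve as the last
bit in `Nat.bit`. -/
def onesParity (n : ℕ) : Bool := decide (Odd ((Nat.digits 2 n).count 1))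

theorem onesParity_eq_false_iff_evil {n : ℕ} : onesParity n = false ↔ Evil n := by
  rw [onesParity, decide_eq_false_iff_not, Nat.not_odd_iff_even, Evil]

theorem onesParity_zero : onesParity 0 = false := by
  simp [onesParity]

theorem onesParity_bit (b : Bool) (n : ℕ) : onesParity (Nat.bit b n) = (b ^^ onesParity n) := by
  by_cases no_leading_zero : n = 0 → b = true
  · simp only [onesParity, Nat.digits_two_eq_bits, Nat.bits_append_bit n b no_leading_zero]
    cases b <;> simp [Nat.odd_add_one, -Nat.not_odd_iff_even]
  · obtain ⟨rfl, hb⟩ := Classical.not_imp.mp no_leading_zero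
    simp [hb, onesParity_zero]

theorem exists_xor_bit_onesParity_eq (n : ℕ) : ∃ m, m ^^^ Nat.bit (onesParity n) m = n := by
  induction n using Nat.binaryRec with
  | zero => exact ⟨0, by simp [onesParity_zero]⟩
  | bit b n ih =>
    obtain ⟨m, hm⟩ := ih
    refine ⟨Nat.bit (onesParity n) m, ?_⟩
    calc Nat.bit (onesParity n) m ^^^
          Nat.bit (onesParity (Nat.bit b n)) (Nat.bit (onesParity n) m)
      _ = Nat.bit (onesParity n ^^ (b ^^ onesParity n)) (m ^^^ Nat.bit (onesParity n) m) := by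
        rw [onesParity_bit, Nat.xor_bit]
      _ = Nat.bit b n := by rw [hm, Bool.xor_left_comm, Bool.xor_self, Bool.xor_false]

theorem xor_bit_self_injective (c : Bool) : Function.Injective fun m => m ^^^ Nat.bit c m := by
  intro m n (h : m ^^^ Nat.bit c m = n ^^^ Nat.bit c n)
  have diff_xor_double : (m ^^^ n) ^^^ Nat.bit false (m ^^^ n) = 0 := by
    calc (m ^^^ n) ^^^ Nat.bit false (m ^^^ n)
      _ = (m ^^^ n) ^^^ (Nat.bit c m ^^^ Nat.bit c n) := by rw [Nat.xor_bit, bne_self_eq_false]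
      _ = (m ^^^ Nat.bit c m) ^^^ (n ^^^ Nat.bit c n) := by ac_rfl
      _ = 0 := by rw [h, Nat.xor_self]
  have diff_eq_double : m ^^^ n = 2 * (m ^^^ n) := Nat.xor_eq_zero_iff.mp diff_xor_double
  exact Nat.xor_eq_zero_iff.mp (by lia)

theorem stmt_12_general (e : ℕ) : ∃! m : ℕ, m ^^^ Nat.bit (onesParity e) m = e :=
  existsUnique_of_exists_of_unique (exists_xor_bit_onesParity_eq e)
    fun _ _ hm hn => xor_bit_self_injective (onesParity e) (hm.trans hn.symm)

theorem stmt_12 (e : ℕ) (he : Evil e) :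
    ∃! m : ℕ, m ^^^ (2 * m) = e := by
  simpa only [onesParity_eq_false_iff_evil.mpr he, Nat.bit_false] using stmt_12_general e
end

section
/- The set {m XOR (2m) : m ∈ ℕ} is exactly the set of evil numbers, i.e., a natural number n satisfies n = m XOR (2m) for some m ∈ ℕ if and only if the binary expansion of n contains an even number of 1s. -/
/-!
Write `γ k = k ^^^ (k / 2)` for the Gray code of `k`. It maps `ℕ` onto `ℕ`, because the bits of `k`
can be recovered from those of `γ k`, most significant first. The parity of the number of ones turns
XOR into addition modulo 2, and passing from `k` to `k / 2` only drops the last bit, so `γ k` is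
evil exactly when `k` is even. The numbers `m ^^^ (2 * m) = γ (2 * m)` are therefore the evil ones.
-/

theorem evil_bit_iff (b : Bool) (n : ℕ) : Evil (Nat.bit b n) ↔ (b = false ↔ Evil n) := by
  by_cases h : n = 0 → b = true
  · rw [Evil, Evil, Nat.digits_two_eq_bits, Nat.bits_append_bit n b h, List.map_cons,
      ← Nat.digits_two_eq_bits]
    cases b <;> simp [Nat.even_add_one]
  · obtain ⟨rfl, rfl⟩ : n = 0 ∧ b = false := by simpa using h
    simp [Evil]

theorem evil_xor_iff (m n : ℕ) : Evil (m ^^^ n) ↔ (Evil m ↔ Evil n) := by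
  induction m using Nat.binaryRec generalizing n with
  | zero => simp [Evil]
  | bit a m ih =>
    cases n using Nat.bitCasesOn with
    | bit b n =>
      rw [Nat.xor_bit, evil_bit_iff, evil_bit_iff, evil_bit_iff, ih]
      cases a <;> cases b <;> simp <;> tauto

/-- The binary-reflected Gray code of `k`; at even `k` it takes the values `m ^^^ (2 * m)`. -/
def grayCode (k : ℕ) : ℕ := k ^^^ (k / 2)

theorem grayCode_two_mul (m : ℕ) : grayCode (2 * m) = m ^^^ (2 * m) := by
  rw [grayCode, Nat.mul_div_cancel_left m two_pos, Nat.xor_comm]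

theorem grayCode_bit (b : Bool) (k : ℕ) :
    grayCode (Nat.bit b k) = Nat.bit (b ^^ k.bodd) (grayCode k) := by
  calc grayCode (Nat.bit b k)
      = Nat.bit b k ^^^ Nat.bit k.bodd k.div2 := by
        rw [grayCode, Nat.bit_div_two, Nat.bit_bodd_div2]
    _ = Nat.bit (b ^^ k.bodd) (grayCode k) := by
        rw [Nat.xor_bit, Nat.div2_val, grayCode, Bool.bne_eq_xor]

theorem grayCode_surjective : Function.Surjective grayCode := by
  intro n
  induction n using Nat.binaryRec with
  | zero => exact ⟨0, rfl⟩
  | bit b n ih =>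
    obtain ⟨k, rfl⟩ := ih
    use Nat.bit (b ^^ k.bodd) k
    rw [grayCode_bit, Bool.xor_assoc, Bool.xor_self, Bool.xor_false]

theorem evil_grayCode_iff (k : ℕ) : Evil (grayCode k) ↔ Even k := by
  cases k using Nat.bitCasesOn with
  | bit b k =>
    rw [grayCode, evil_xor_iff, Nat.bit_div_two, evil_bit_iff]
    cases b <;> simp [Nat.bit]

theorem stmt_13 (n : ℕ) :
    (∃ m : ℕ, m ^^^ (2 * m) = n) ↔ Evil n := by
  constructor
  · rintro ⟨m, rfl⟩
    rw [← grayCode_two_mul, evil_grayCode_iff]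
    exact even_two_mul m
  · intro hn
    obtain ⟨k, rfl⟩ := grayCode_surjective n
    obtain ⟨m, rfl⟩ := even_iff_exists_two_mul.mp ((evil_grayCode_iff k).mp hn)
    exact ⟨m, (grayCode_two_mul m).symm⟩
end

section
/- Define N(m) = m XOR (2m) and, for an odious number i ≥ 1, let O_i = {N^m(i) : m ≥ 1} be the forward orbit of i under N (where N^m denotes the m-fold iterate of N). Then: (1) for distinct odious numbers i ≠ j, the sets O_i and O_j are disjoint; and (2) the union of the sets O_i over all odious i equals {N(m) : m ≥ 1}, i.e., every number of the form N(m) with m ≥ 1 lies in O_i for some odious i. -/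
/-- A natural number is odious if its binary expansion has an odd number of ones. -/
def Odious (n : ℕ) : Prop := Odd ((Nat.digits 2 n).count 1)

/-- The forward orbit `{N^m(i) : m ≥ 1}` of `i` under `N`. -/
def orbit (i : ℕ) : Set ℕ := {x | ∃ m ≥ 1, nimDouble^[m] i = x}

/-!
The map `N` is `XOR`-linear with trivial kernel, hence injective. Modulo 2, the number of binary
ones is additive under `XOR` and unchanged by doubling, so `N` takes only evil values. Conversely,
all binary digits of `N m` except the last can be prescribed, and the last one is then forced by
evilness; so the odious numbers are exactly the numbers outside the range of `N`. Injectivity now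
keeps forward orbits of distinct odious numbers apart, and since `m < N m` for `m ≥ 1`, pulling a
positive number back along `N` must stop, which it can only do at an odious number.
-/

section Iterate

open Function Set

variable {α : Type*} {f : α → α}

theorem eq_of_iterate_eq_iterate_of_notMem_range (hf : Injective f) {x y : α} (hx : x ∉ range f)
    (hy : y ∉ range f) {a b : ℕ} (h : f^[a] x = f^[b] y) : x = y := by
  induction a generalizing b with
  | zero =>
    cases b with
    | zero => exact h
    | succ b => exact absurd ⟨_, (iterate_succ_apply' f b y).symm.trans h.symm⟩ hx
  | succ a ih =>
    cases b with
    | zero => exact absurd ⟨_, (iterate_succ_apply' f a x).symm.trans h⟩ hy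
    | succ b => exact ih (hf (by simpa only [iterate_succ_apply'] using h))

theorem exists_notMem_range_iterate_eq [PartialOrder α] [WellFoundedLT α] (hf : id ≤ f) {x : α}
    (hx : ¬ IsFixedPt f x) : ∃ y ∉ range f, ∃ k, f^[k] y = x := by
  induction x using WellFoundedLT.induction with
  | ind x ih =>
    by_cases hrange : x ∈ range f
    · obtain ⟨z, rfl⟩ := hrange
      have hz : ¬ IsFixedPt f z := fun h => hx (congrArg f h)
      obtain ⟨y, hy, k, rfl⟩ := ih z ((hf z).lt_of_ne' hz) hz
      exact ⟨y, hy, k + 1, iterate_succ_apply' f k y⟩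
    · exact ⟨x, hrange, 0, rfl⟩

end Iterate

section Odious

theorem not_odious_zero : ¬ Odious 0 := by
  simp [Odious]

theorem odious_bit (b : Bool) (n : ℕ) : Odious (n.bit b) ↔ Xor (b = true) (Odious n) := by
  obtain hzero | hpos := (n.bit b).eq_zero_or_pos
  · obtain ⟨rfl, rfl⟩ := Nat.bit_eq_zero_iff.mp hzero
    simp [Odious]
  · have hdigits : Nat.digits 2 (n.bit b) = b.toNat :: Nat.digits 2 n := by
      rw [Nat.digits_def' one_lt_two hpos, Nat.bit_mod_two, Nat.bit_div_two]
    rw [Odious, hdigits]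
    cases b <;> simp [Odious, Nat.odd_add_one]

theorem odious_two_mul (n : ℕ) : Odious (2 * n) ↔ Odious n := by
  simpa using odious_bit false n

theorem odious_xor (a b : ℕ) : Odious (a ^^^ b) ↔ Xor (Odious a) (Odious b) := by
  induction a using Nat.binaryRec generalizing b with
  | zero => simp [not_odious_zero]
  | bit c a ih =>
    cases b using Nat.bitCasesOn with
    | bit d b =>
      rw [Nat.xor_bit, odious_bit, odious_bit, odious_bit, ih]
      cases c <;> cases d <;> grind

end Odious

section NimDouble

theorem two_mul_xor (a b : ℕ) : 2 * (a ^^^ b) = 2 * a ^^^ 2 * b := by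
  simpa using (Nat.xor_bit false a false b).symm

theorem bit_xor_toNat (b c : Bool) (n : ℕ) : n.bit b ^^^ c.toNat = n.bit (b ^^ c) := by
  have hc : c.toNat = Nat.bit c 0 := by cases c <;> rfl
  rw [hc, Nat.xor_bit, Nat.xor_zero]

theorem nimDouble_xor (a b : ℕ) : nimDouble (a ^^^ b) = nimDouble a ^^^ nimDouble b := by
  simp only [nimDouble, two_mul_xor]
  ac_rfl

theorem nimDouble_eq_zero_iff {m : ℕ} : nimDouble m = 0 ↔ m = 0 := by
  rw [nimDouble, Nat.xor_eq_zero_iff]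
  lia

theorem nimDouble_injective : Function.Injective nimDouble := fun a b h => by
  rwa [← Nat.xor_eq_zero_iff, ← nimDouble_xor, nimDouble_eq_zero_iff, Nat.xor_eq_zero_iff] at h

theorem lt_nimDouble {m : ℕ} (hm : m ≠ 0) : m < nimDouble m := by
  have hlt : m < 2 ^ (Nat.log 2 m + 1) := Nat.lt_pow_succ_log_self one_lt_two m
  have hle : 2 ^ (Nat.log 2 m + 1) ≤ 2 * m := by
    rw [pow_succ']
    exact Nat.mul_le_mul_left 2 (Nat.pow_log_le_self 2 hm)
  by_contra! hN
  have hxor : m ^^^ nimDouble m = 2 * m := Nat.xor_xor_cancel_left m (2 * m)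
  exact (hxor ▸ Nat.xor_lt_two_pow hlt (hN.trans_lt hlt)).not_ge hle

theorem id_le_nimDouble : id ≤ nimDouble := fun m => by
  obtain rfl | hm := eq_or_ne m 0
  · exact Nat.zero_le _
  · exact (lt_nimDouble hm).le

theorem not_odious_nimDouble (m : ℕ) : ¬ Odious (nimDouble m) := by
  simp [nimDouble, odious_xor, odious_two_mul]

theorem nimDouble_bit (b : Bool) (m : ℕ) :
    nimDouble (m.bit b) = (nimDouble m ^^^ b.toNat).bit b := by
  have hbit : 2 * m ^^^ b.toNat = m.bit b := by
    simpa using bit_xor_toNat false b m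
  calc
    nimDouble (m.bit b) = (m ^^^ m.bit b).bit b := by
      simpa [nimDouble] using Nat.xor_bit b m false (m.bit b)
    _ = (nimDouble m ^^^ b.toNat).bit b := by rw [nimDouble, Nat.xor_assoc, hbit]

theorem exists_nimDouble_eq_bit (n : ℕ) : ∃ m b, nimDouble m = n.bit b := by
  induction n using Nat.binaryRec with
  | zero => exact ⟨0, false, rfl⟩
  | bit b n ih =>
    obtain ⟨m, c, hm⟩ := ih
    refine ⟨m.bit (c ^^ b), c ^^ b, ?_⟩
    have hcancel : (c ^^ (c ^^ b)) = b := by simp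
    rw [nimDouble_bit, hm, bit_xor_toNat, hcancel]

theorem mem_range_nimDouble_iff {n : ℕ} : n ∈ Set.range nimDouble ↔ ¬ Odious n := by
  refine ⟨?_, fun hn => ?_⟩
  · rintro ⟨m, rfl⟩
    exact not_odious_nimDouble m
  · cases n using Nat.bitCasesOn with
    | bit b n =>
      obtain ⟨m, c, hm⟩ := exists_nimDouble_eq_bit n
      have hc : ¬ Odious (n.bit c) := hm ▸ not_odious_nimDouble m
      rw [odious_bit, not_xor] at hn hc
      exact ⟨m, hm.trans (congrArg n.bit (Bool.eq_iff_iff.mpr (hc.trans hn.symm)))⟩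

theorem exists_odious_iterate_nimDouble_eq {m : ℕ} (hm : m ≠ 0) :
    ∃ i ≥ 1, Odious i ∧ ∃ k, nimDouble^[k] i = m := by
  obtain ⟨i, hi, hk⟩ := exists_notMem_range_iterate_eq id_le_nimDouble (lt_nimDouble hm).ne'
  have hodious : Odious i := by rwa [mem_range_nimDouble_iff, not_not] at hi
  exact ⟨i, Nat.pos_of_ne_zero fun h => not_odious_zero (h ▸ hodious), hodious, hk⟩

end NimDouble

theorem stmt_14 :
    (∀ i j : ℕ, 1 ≤ i → 1 ≤ j → Odious i → Odious j → i ≠ j →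
      Disjoint (orbit i) (orbit j)) ∧
    (⋃ i ∈ {i : ℕ | 1 ≤ i ∧ Odious i}, orbit i) = {n : ℕ | ∃ m ≥ 1, n = nimDouble m} := by
  have notMem_range {i : ℕ} (hi : Odious i) : i ∉ Set.range nimDouble :=
    fun h => mem_range_nimDouble_iff.mp h hi
  constructor
  · intro i j _ _ hi hj hij
    rw [Set.disjoint_left]
    rintro _ ⟨a, _, rfl⟩ ⟨b, _, hab⟩
    exact hij (eq_of_iterate_eq_iterate_of_notMem_range nimDouble_injective
      (notMem_range hi) (notMem_range hj) hab.symm)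
  · ext n
    rw [Set.mem_iUnion₂]
    constructor
    · rintro ⟨i, ⟨hi, _⟩, _ | k, hk, rfl⟩
      · contradiction
      · exact ⟨nimDouble^[k] i, hi.trans (Function.id_le_iterate_of_id_le id_le_nimDouble k i),
          Function.iterate_succ_apply' ..⟩
    · rintro ⟨m, hm, rfl⟩
      obtain ⟨i, hi, hodious, k, rfl⟩ :=
        exists_odious_iterate_nimDouble_eq (Nat.ne_zero_of_lt hm)
      exact ⟨i, ⟨hi, hodious⟩, k + 1, Nat.le_add_left 1 k, Function.iterate_succ_apply' ..⟩
end

section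
/- Define α(m) = m XOR ⌊m/2⌋ and N(m) = m XOR (2m), and let e(k) denote the k-th evil number in increasing order (with e(0) = 0, e(1) = 3). Then for every m ∈ ℕ, e(α(m)) = N(m). -/
/-! Exactly one of `2 * k` and `2 * k + 1` is evil, so the `k`-th evil number is the evil one of
the two; in other words, an evil number `n` has index `n / 2`. Parity of the number of ones is
additive under XOR, so `m ^^^ (2 * m)` is evil, and halving it gives `m ^^^ (m / 2)`. -/

section OneInEachPair

variable {p : ℕ → Prop}

theorem count_two_mul_of_two_mul_add_one_iff_not [DecidablePred p]
    (hp : ∀ k, p (2 * k + 1) ↔ ¬ p (2 * k)) (k : ℕ) : Nat.count p (2 * k) = k := by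
  induction k with
  | zero => rfl
  | succ k ih =>
    rw [Nat.mul_succ, Nat.count_succ, Nat.count_succ, ih]
    by_cases h : p (2 * k) <;> simp [hp, h]

theorem count_eq_div_two_of_two_mul_add_one_iff_not [DecidablePred p]
    (hp : ∀ k, p (2 * k + 1) ↔ ¬ p (2 * k)) {n : ℕ} (hn : p n) : Nat.count p n = n / 2 := by
  obtain ⟨k, rfl | rfl⟩ := n.even_or_odd'
  · rw [count_two_mul_of_two_mul_add_one_iff_not hp, Nat.mul_div_cancel_left k two_pos]
  · rw [Nat.count_succ, count_two_mul_of_two_mul_add_one_iff_not hp, if_neg ((hp k).mp hn)]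
    lia

theorem nth_div_two_of_two_mul_add_one_iff_not
    (hp : ∀ k, p (2 * k + 1) ↔ ¬ p (2 * k)) {n : ℕ} (hn : p n) : Nat.nth p (n / 2) = n := by
  classical
  rw [← count_eq_div_two_of_two_mul_add_one_iff_not hp hn, Nat.nth_count hn]

end OneInEachPair

theorem evil_two_mul (k : ℕ) : Evil (2 * k) ↔ Evil k := by
  obtain rfl | hk := k.eq_zero_or_pos
  · rfl
  · simp [Evil, Nat.digits_base_mul one_lt_two hk]

theorem evil_two_mul_add_one (k : ℕ) : Evil (2 * k + 1) ↔ ¬ Evil k := by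
  rw [Evil, Evil, add_comm, Nat.digits_add 2 one_lt_two 1 k one_lt_two (.inl one_ne_zero),
    List.count_cons_self, Nat.even_add_one]

theorem evil_iff_even_iff_evil_div_two (n : ℕ) : Evil n ↔ (Even n ↔ Evil (n / 2)) := by
  obtain ⟨k, rfl | rfl⟩ := n.even_or_odd'
  · simp [evil_two_mul]
  · have half : (2 * k + 1) / 2 = k := by lia
    simp [evil_two_mul_add_one, half]

theorem evil_xor (a b : ℕ) : Evil (a ^^^ b) ↔ (Evil a ↔ Evil b) := by
  induction a using Nat.strong_induction_on generalizing b with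
  | _ a ih =>
    obtain rfl | ha := a.eq_zero_or_pos
    · simp [Evil]
    · have halves : Evil ((a ^^^ b) / 2) ↔ (Evil (a / 2) ↔ Evil (b / 2)) := by
        rw [Nat.xor_div_two]
        exact ih (a / 2) (Nat.div_lt_self ha one_lt_two) (b / 2)
      rw [evil_iff_even_iff_evil_div_two (a ^^^ b), evil_iff_even_iff_evil_div_two a,
        evil_iff_even_iff_evil_div_two b, halves, Nat.even_xor]
      tauto

theorem evil_xor_two_mul (m : ℕ) : Evil (m ^^^ (2 * m)) := by
  rw [evil_xor, evil_two_mul]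

theorem nth_evil_div_two {n : ℕ} (hn : Evil n) : Nat.nth Evil (n / 2) = n :=
  nth_div_two_of_two_mul_add_one_iff_not
    (fun _ ↦ by rw [evil_two_mul_add_one, evil_two_mul]) hn

theorem stmt_15 (m : ℕ) :
    Nat.nth Evil (m ^^^ (m / 2)) = m ^^^ (2 * m) := by
  have half : (m ^^^ (2 * m)) / 2 = m ^^^ (m / 2) := by
    rw [Nat.xor_div_two, Nat.mul_div_cancel_left m two_pos, Nat.xor_comm]
  rw [← half, nth_evil_div_two (evil_xor_two_mul m)]
end

section
/- Let p be a prime, let a, b, c ∈ {0,…,p−1} and x, y, z ∈ ℕ, and write T(x,y,z) = (x+y+z)!/(x!·y!·z!) for the trinomial coefficient. If a+b+c < p, then T(px+a, py+b, pz+c) ≡ C(a+b+c, a) · C(b+c, b) · T(x,y,z) (mod p). If a+b+c ≥ p, then T(px+a, py+b, pz+c) ≡ 0 (mod p). -/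
/-- The trinomial coefficient `T(x,y,z) = (x+y+z)! / (x!·y!·z!)` (exact natural division). -/
def trinomial (x y z : ℕ) : ℕ :=
  (x + y + z).factorial / (x.factorial * y.factorial * z.factorial)

/-!
Splitting off one entry at a time writes a multinomial coefficient as a product of binomial
coefficients, and Lucas's theorem applies to each factor. As long as the last base-`p` digits add
up without a carry, the last digit of every partial sum is the sum of the last digits, and the
factors recombine into two multinomial coefficients. At the first carry, the last digit of the
partial sum drops below that of the entry being split off, so that factor vanishes modulo `p`.
-/

open Finset

section Digits

variable {ι : Type*} {s : Finset ι} {f : ι → ℕ} {p : ℕ}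

theorem sum_mod_eq_of_sum_mod_lt (h : ∑ i ∈ s, f i % p < p) :
    (∑ i ∈ s, f i) % p = ∑ i ∈ s, f i % p := by
  rw [sum_nat_mod, Nat.mod_eq_of_lt h]

theorem sum_div_eq_of_sum_mod_lt (h : ∑ i ∈ s, f i % p < p) :
    (∑ i ∈ s, f i) / p = ∑ i ∈ s, f i / p := by
  have split_sum : ∑ i ∈ s, f i = ∑ i ∈ s, f i % p + p * ∑ i ∈ s, f i / p := by
    simp only [mul_sum, ← sum_add_distrib, Nat.mod_add_div]
  rw [split_sum, Nat.add_mul_div_left _ _ (Nat.zero_lt_of_lt h), Nat.div_eq_of_lt h, zero_add]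

theorem add_mod_lt_mod_left_of_le_mod_add_mod {m n : ℕ}
    (hcarry : p ≤ m % p + n % p) (hp : 0 < p) : (m + n) % p < m % p := by
  have n_mod_lt : n % p < p := Nat.mod_lt n hp
  have carry_eq : (m + n) % p + p = m % p + n % p := Nat.add_mod_add_of_le_add_mod hcarry
  omega

end Digits

section Lucas

variable {ι : Type*} {s : Finset ι} {f : ι → ℕ} {p : ℕ} [Fact p.Prime]

theorem dvd_choose_of_mod_lt {n k : ℕ} (h : n % p < k % p) : p ∣ n.choose k := by
  rw [← Nat.modEq_zero_iff_dvd]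
  simpa only [Nat.choose_eq_zero_of_lt h, zero_mul] using
    Choose.choose_modEq_choose_mod_mul_choose_div_nat (n := n) (k := k) (p := p)

theorem dvd_multinomial_of_le_sum_mod (h : p ≤ ∑ i ∈ s, f i % p) : p ∣ Nat.multinomial s f := by
  induction s using Finset.cons_induction with
  | empty => exact absurd h (by simpa using (Fact.out : p.Prime).ne_zero)
  | cons a s ha ih =>
    rw [Nat.multinomial_cons]
    rw [sum_cons] at h
    obtain carry_in_tail | no_carry := le_or_gt p (∑ i ∈ s, f i % p)
    · exact (ih carry_in_tail).mul_left _
    · rw [← sum_mod_eq_of_sum_mod_lt no_carry] at h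
      exact (dvd_choose_of_mod_lt
        (add_mod_lt_mod_left_of_le_mod_add_mod h (Fact.out : p.Prime).pos)).mul_right _

theorem multinomial_modEq_of_sum_mod_lt (h : ∑ i ∈ s, f i % p < p) :
    Nat.multinomial s f ≡
      Nat.multinomial s (f · % p) * Nat.multinomial s (f · / p) [MOD p] := by
  induction s using Finset.cons_induction with
  | empty => simp [Nat.ModEq.refl]
  | cons a s ha ih =>
    have tail_lt : ∑ i ∈ s, f i % p < p := (sum_le_sum_of_subset (subset_cons ha)).trans_lt h
    have head_modEq := Choose.choose_modEq_choose_mod_mul_choose_div_nat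
      (n := ∑ i ∈ cons a s ha, f i) (k := f a) (p := p)
    rw [sum_mod_eq_of_sum_mod_lt h, sum_div_eq_of_sum_mod_lt h] at head_modEq
    simp only [sum_cons] at head_modEq
    simpa only [Nat.multinomial_cons, mul_mul_mul_comm] using head_modEq.mul (ih tail_lt)

theorem multinomial_modEq_multinomial_mod_mul_multinomial_div (s : Finset ι) (f : ι → ℕ) :
    Nat.multinomial s f ≡
      Nat.multinomial s (f · % p) * Nat.multinomial s (f · / p) [MOD p] := by
  obtain no_carry | carry := lt_or_ge (∑ i ∈ s, f i % p) p
  · exact multinomial_modEq_of_sum_mod_lt no_carry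
  · have digits_dvd : p ∣ Nat.multinomial s (f · % p) :=
      dvd_multinomial_of_le_sum_mod (by simpa only [Nat.mod_mod] using carry)
    exact (dvd_multinomial_of_le_sum_mod carry).modEq_zero_nat.trans
      (digits_dvd.mul_right _).modEq_zero_nat.symm

end Lucas

theorem trinomial_eq_multinomial (x y z : ℕ) :
    trinomial x y z = Nat.multinomial univ ![x, y, z] :=
  (Nat.multinomial_univ_three x y z).symm

theorem trinomial_eq_choose_mul_choose (x y z : ℕ) :
    trinomial x y z = (x + y + z).choose x * (y + z).choose y := by
  refine Nat.div_eq_of_eq_mul_left (by positivity) ?_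
  calc (x + y + z).factorial
      = (x + (y + z)).choose x * x.factorial * (y + z).factorial := by
        rw [Nat.choose_symm_add, Nat.add_choose_mul_factorial_mul_factorial, add_assoc]
    _ = (x + y + z).choose x * x.factorial *
          ((y + z).choose y * y.factorial * z.factorial) := by
        rw [Nat.choose_symm_add (a := y), Nat.add_choose_mul_factorial_mul_factorial, add_assoc]
    _ = (x + y + z).choose x * (y + z).choose y *
          (x.factorial * y.factorial * z.factorial) := by ring

theorem stmt_19 (p a b c x y z : ℕ) (hp : p.Prime)
    (ha : a < p) (hb : b < p) (hc : c < p) :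
    (a + b + c < p →
      trinomial (p * x + a) (p * y + b) (p * z + c) ≡
        Nat.choose (a + b + c) a * Nat.choose (b + c) b * trinomial x y z [MOD p]) ∧
    (p ≤ a + b + c →
      trinomial (p * x + a) (p * y + b) (p * z + c) ≡ 0 [MOD p]) := by
  have : Fact p.Prime := ⟨hp⟩
  let f : Fin 3 → ℕ := ![p * x + a, p * y + b, p * z + c]
  have f_mod : (f · % p) = ![a, b, c] := by
    ext i; fin_cases i <;> simp [f, Nat.mod_eq_of_lt, *]
  have f_div : (f · / p) = ![x, y, z] := by
    ext i; fin_cases i <;> simp [f, Nat.mul_add_div hp.pos, *]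
  rw [← trinomial_eq_choose_mul_choose, trinomial_eq_multinomial, trinomial_eq_multinomial a,
    trinomial_eq_multinomial x, ← f_mod, ← f_div]
  constructor
  · intro _
    exact multinomial_modEq_multinomial_mod_mul_multinomial_div univ f
  · intro carry
    have digit_sum : ∑ i, f i % p = a + b + c := by rw [f_mod, Fin.sum_univ_three]; rfl
    exact (dvd_multinomial_of_le_sum_mod (digit_sum ▸ carry)).modEq_zero_nat
end
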